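/- Let u and v be Lyndon words with v > u in the lexicographic order. Then for every word a with a ≥ v in the lexicographic order and every word b, the concatenation ab satisfies ab ≫ u. -/

import Mathlib

/-- A word `u` is a Lyndon word if it is nonempty and lexicographically smaller than
each of its proper nonempty suffixes. -/
def IsLyndon {X : Type*} [LinearOrder X] (u : List X) : Prop :=
  u ≠ [] ∧ ∀ v w : List X, v ≠ [] → w ≠ [] → u = v ++ w → List.Lex (· < ·) u w

/-- `ls` is a Lyndon factorization of `u`: all factors are Lyndon words, the factors are
(lexicographically) nonincreasing, and their concatenation is `u`. -/
def IsLyndonFactorization {X : Type*} [LinearOrder X] (ls : List (List X)) (u : List X) : Prop :=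
  (∀ l ∈ ls, IsLyndon l) ∧ ls.Chain' (fun a b => ¬ List.Lex (· < ·) a b) ∧ ls.flatten = u

/-- `v ≫ u` : the first Lyndon letter of the Lyndon decomposition of `v` is
lexicographically greater than `u`. -/
def MuchGt {X : Type*} [LinearOrder X] (v u : List X) : Prop :=
  ∃ (l : List X) (t : List (List X)),
    IsLyndonFactorization (l :: t) v ∧ List.Lex (· < ·) u l

/-!
A Lyndon word `v` is larger than every product of words smaller than `v`: if `l < v`, then either
`l` and `v` differ at some letter, which already decides `l ++ w < v`, or `v = l ++ x`, and then
`w ≤ v < x` gives `l ++ w < l ++ x = v`. So if a word dominates `v`, then so does one of its Lyndon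
letters, and therefore the first of them, which is the largest.

A Lyndon decomposition exists because a letter put in front of one absorbs the factors that follow
it for as long as they are larger: the product of two increasing Lyndon words is Lyndon.
-/

theorem append_lt_append_of_lt_of_not_isPrefix {X : Type*} [LT X] {l m : List X} (h : l < m)
    (hlm : ¬l <+: m) (p q : List X) : l ++ p < m ++ q := by
  induction h with
  | nil => exact absurd List.nil_prefix hlm
  | rel hxy => exact .rel hxy
  | cons _ ih => exact .cons (ih fun hp => hlm ((List.prefix_cons_inj _).2 hp))

section

variable {X : Type*} [LinearOrder X]

namespace IsLyndon

theorem singleton (x : X) : IsLyndon [x] := by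
  refine ⟨List.cons_ne_nil x [], fun v w hv hw h => ?_⟩
  rcases List.singleton_eq_append_iff.1 h with ⟨rfl, -⟩ | ⟨-, rfl⟩ <;> contradiction

theorem append_lt_of_lt_of_le {l v w : List X} (hv : IsLyndon v) (hl : l ≠ []) (hlv : l < v)
    (hwv : w ≤ v) : l ++ w < v := by
  by_cases hp : l <+: v
  · obtain ⟨x, rfl⟩ := hp
    have hx : x ≠ [] := by rintro rfl; simp at hlv
    have hwx : w < x := hwv.trans_lt (hv.2 l x hl hx rfl)
    exact List.append_left_lt hwx
  · simpa using append_lt_append_of_lt_of_not_isPrefix hlv hp w []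

theorem flatten_lt {v : List X} {ls : List (List X)} (hv : IsLyndon v) (h : ∀ l ∈ ls, l < v) :
    ls.flatten < v := by
  induction ls with
  | nil => exact (not_lt.1 (List.not_lt_nil v)).lt_of_ne hv.1.symm
  | cons l ls ih =>
    obtain ⟨hlv, hls⟩ := List.forall_mem_cons.1 h
    rcases eq_or_ne l [] with rfl | hl
    · exact ih hls
    · exact hv.append_lt_of_lt_of_le hl hlv (ih hls).le

theorem exists_mem_le_of_le_flatten {v : List X} {ls : List (List X)} (hv : IsLyndon v)
    (h : v ≤ ls.flatten) : ∃ l ∈ ls, v ≤ l := by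
  contrapose! h
  exact hv.flatten_lt h

theorem append {l m : List X} (hl : IsLyndon l) (hm : IsLyndon m) (h : l < m) :
    IsLyndon (l ++ m) := by
  refine ⟨List.append_ne_nil_of_left_ne_nil hl.1 m, fun v w hv hw e => ?_⟩
  have hlm : l ++ m < m := hm.append_lt_of_lt_of_le hl.1 h le_rfl
  rcases List.append_eq_append_iff.1 e with ⟨s, rfl, rfl⟩ | ⟨s, rfl, rfl⟩
  · rcases eq_or_ne s [] with rfl | hs
    · exact hlm
    · exact hlm.trans (hm.2 s w hs hw rfl)
  · rcases eq_or_ne s [] with rfl | hs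
    · exact hlm
    · have hp : ¬v ++ s <+: s := fun hp => by simpa [hv] using hp.length_le
      exact append_lt_append_of_lt_of_not_isPrefix (hl.2 v s hv hs rfl) hp m m

end IsLyndon

namespace IsLyndonFactorization

theorem le_head_of_mem {k l w : List X} {t : List (List X)}
    (h : IsLyndonFactorization (k :: t) w) (hl : l ∈ k :: t) : l ≤ k := by
  have hsorted : (k :: t).Pairwise (· ≥ ·) :=
    (h.2.1.imp fun a b (hab : ¬a < b) => not_lt.1 hab).pairwise
  rcases List.mem_cons.1 hl with rfl | hlt
  · exact le_rfl
  · exact List.rel_of_pairwise_cons hsorted hlt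

theorem exists_append {l w : List X} {ls : List (List X)} (hls : IsLyndonFactorization ls w)
    (hl : IsLyndon l) : ∃ ms, IsLyndonFactorization ms (l ++ w) := by
  induction ls generalizing l w with
  | nil =>
    obtain ⟨-, -, rfl⟩ := hls
    exact ⟨[l], List.forall_mem_singleton.2 hl, List.isChain_singleton l, rfl⟩
  | cons m ls ih =>
    obtain ⟨hlyndon, hchain, rfl⟩ := hls
    obtain ⟨hm, hlyndon_tail⟩ := List.forall_mem_cons.1 hlyndon
    by_cases hlm : l < m
    · simpa using ih ⟨hlyndon_tail, hchain.tail, rfl⟩ (hl.append hm hlm)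
    · exact ⟨l :: m :: ls, List.forall_mem_cons.2 ⟨hl, hlyndon⟩,
        List.isChain_cons_cons.2 ⟨hlm, hchain⟩, rfl⟩

end IsLyndonFactorization

theorem exists_isLyndonFactorization (w : List X) : ∃ ls, IsLyndonFactorization ls w := by
  induction w with
  | nil => exact ⟨[], List.forall_mem_nil _, List.isChain_nil, rfl⟩
  | cons x w ih =>
    obtain ⟨ls, hls⟩ := ih
    exact hls.exists_append (IsLyndon.singleton x)

theorem muchGt_append_of_ge_general {u v a : List X} (hv : IsLyndon v) (huv : u < v) (hva : v ≤ a)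
    (b : List X) : MuchGt (a ++ b) u := by
  have hvab : v ≤ a ++ b := hva.trans (not_lt.1 List.le_append_left)
  obtain ⟨ls, hls⟩ := exists_isLyndonFactorization (a ++ b)
  obtain ⟨l, hl, hvl⟩ := hv.exists_mem_le_of_le_flatten (hvab.trans_eq hls.2.2.symm)
  obtain ⟨k, t, rfl⟩ := List.exists_cons_of_ne_nil (List.ne_nil_of_mem hl)
  exact ⟨k, t, hls, huv.trans_le (hvl.trans (hls.le_head_of_mem hl))⟩

end

/-- If `u` and `v` are Lyndon words with `u < v`, then for every word `a ≥ v`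
(lexicographically) and every word `b`, the concatenation `a ++ b` satisfies `a ++ b ≫ u`. -/
theorem muchGt_append_of_ge {X : Type*} [Fintype X] [LinearOrder X]
    (u v : List X) (hu : IsLyndon u) (hv : IsLyndon v)
    (huv : List.Lex (· < ·) u v) :
    ∀ a b : List X, (a = v ∨ List.Lex (· < ·) v a) → MuchGt (a ++ b) u :=
  fun _ b hva => muchGt_append_of_ge_general hv huv (hva.elim Eq.ge fun h => le_of_lt h) b
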